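/- Let q, r, s, t be nonnegative real numbers with qt ≥ rs, q + r > 0, s + t > 0, and t < s. Define I(q,r,s,t) := ∫_{[−1,1]²} max(q·x₁ + r·x₂, 0)·max(s·x₁ + t·x₂, 0) dx₁ dx₂. Then I(q,r,s,t) = (2/3)(qs + rt) + r²(3qt − rs)/(24q²) + t²(qt − 3rs)/(24s²). (Note that the hypotheses force q > 0 and s > 0, so the formula is well defined.) -/

import Mathlib

open MeasureTheory

lemma inner_aux (q r s t c y : ℝ) (hc1 : -1 ≤ c) (hc2 : c ≤ 1)
    (hlo : ∀ x, x ≤ c → (max (q * x + r * y) 0) * (max (s * x + t * y) 0) = 0)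
    (hhi : ∀ x, c ≤ x → 0 ≤ q * x + r * y ∧ 0 ≤ s * x + t * y) :
    ∫ x in Set.Icc (-1 : ℝ) 1, (max (q * x + r * y) 0) * (max (s * x + t * y) 0) =
      q * s * (1 - c ^ 3) / 3 + (q * t + r * s) * y * (1 - c ^ 2) / 2
        + r * t * y ^ 2 * (1 - c) := by
  have hcont : Continuous fun x : ℝ => (max (q * x + r * y) 0) * (max (s * x + t * y) 0) := by
    fun_prop
  rw [integral_Icc_eq_integral_Ioc, ← intervalIntegral.integral_of_le (by norm_num),
    ← intervalIntegral.integral_add_adjacent_intervals (b := c)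
      (hcont.intervalIntegrable _ _) (hcont.intervalIntegrable _ _)]
  have e1 : ∫ x in (-1 : ℝ)..c, (max (q * x + r * y) 0) * (max (s * x + t * y) 0) = 0 := by
    rw [intervalIntegral.integral_congr (g := fun _ => (0 : ℝ))]
    · simp
    · intro x hx
      rw [Set.uIcc_of_le hc1] at hx
      exact hlo x hx.2
  have e2 : ∫ x in c..1, (max (q * x + r * y) 0) * (max (s * x + t * y) 0) =
      ∫ x in c..1, (q * s * x ^ 2 + (q * t + r * s) * y * x + r * t * y ^ 2) := by
    apply intervalIntegral.integral_congr
    intro x hx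
    rw [Set.uIcc_of_le hc2] at hx
    obtain ⟨h1, h2⟩ := hhi x hx.1
    simp only [max_eq_left h1, max_eq_left h2]
    ring
  rw [e1, e2, intervalIntegral.integral_add (Continuous.intervalIntegrable (by fun_prop) _ _)
    (Continuous.intervalIntegrable (by fun_prop) _ _),
    intervalIntegral.integral_add (Continuous.intervalIntegrable (by fun_prop) _ _)
    (Continuous.intervalIntegrable (by fun_prop) _ _),
    intervalIntegral.integral_const_mul, intervalIntegral.integral_const_mul, integral_pow,
    integral_id, intervalIntegral.integral_const]
  simp only [smul_eq_mul]
  push_cast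
  ring

lemma poly_aux (A B C D a b : ℝ) :
    ∫ y in a..b, (A + B * y + C * y ^ 2 + D * y ^ 3) =
      A * (b - a) + B * (b ^ 2 - a ^ 2) / 2 + C * (b ^ 3 - a ^ 3) / 3
        + D * (b ^ 4 - a ^ 4) / 4 := by
  rw [intervalIntegral.integral_add (Continuous.intervalIntegrable (by fun_prop) _ _)
    (Continuous.intervalIntegrable (by fun_prop) _ _),
    intervalIntegral.integral_add (Continuous.intervalIntegrable (by fun_prop) _ _)
    (Continuous.intervalIntegrable (by fun_prop) _ _),
    intervalIntegral.integral_add (Continuous.intervalIntegrable (by fun_prop) _ _)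
    (Continuous.intervalIntegrable (by fun_prop) _ _),
    intervalIntegral.integral_const_mul, intervalIntegral.integral_const_mul,
    intervalIntegral.integral_const_mul, integral_pow, integral_pow,
    integral_id, intervalIntegral.integral_const]
  simp only [smul_eq_mul]
  push_cast
  ring

/-- The integral with `r = q a`, `t = s b`. -/
lemma main_aux (q s a b : ℝ) (hq : 0 < q) (hs : 0 < s) (ha : 0 ≤ a) (hab : a ≤ b) (hb : b < 1) :
    ∫ p in (Set.Icc (-1 : ℝ) 1) ×ˢ (Set.Icc (-1 : ℝ) 1),
        (max (q * p.1 + (q * a) * p.2) 0) * (max (s * p.1 + (s * b) * p.2) 0) =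
      q * s * (2 / 3 * (1 + a * b) + a ^ 2 * (3 * b - a) / 24 + b ^ 2 * (b - 3 * a) / 24) := by
  have hcont : Continuous fun p : ℝ × ℝ =>
      (max (q * p.1 + (q * a) * p.2) 0) * (max (s * p.1 + (s * b) * p.2) 0) := by
    fun_prop
  have hint : IntegrableOn (fun p : ℝ × ℝ =>
      (max (q * p.1 + (q * a) * p.2) 0) * (max (s * p.1 + (s * b) * p.2) 0))
      ((Set.Icc (-1 : ℝ) 1) ×ˢ (Set.Icc (-1 : ℝ) 1)) :=
    hcont.continuousOn.integrableOn_compact (isCompact_Icc.prod isCompact_Icc)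
  rw [IntegrableOn, Measure.volume_eq_prod, ← Measure.prod_restrict] at hint
  rw [Measure.volume_eq_prod, ← Measure.prod_restrict, integral_prod_symm _ hint]
  have hI := hint.integral_prod_right
  change IntegrableOn _ _ _ at hI
  have hII : IntervalIntegrable (fun y : ℝ => ∫ x in Set.Icc (-1 : ℝ) 1,
      (max (q * x + (q * a) * y) 0) * (max (s * x + (s * b) * y) 0)) volume (-1) 1 := by
    rw [intervalIntegrable_iff_integrableOn_Icc_of_le (by norm_num)]
    exact hI
  have fac : ∀ k c x y : ℝ, k * x + k * c * y = k * (x + c * y) := fun _ _ _ _ => by ring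
  have hpos : ∀ y ∈ Set.uIcc (0 : ℝ) 1, (∫ x in Set.Icc (-1 : ℝ) 1,
      (max (q * x + (q * a) * y) 0) * (max (s * x + (s * b) * y) 0)) =
      q * s / 3 + q * s * (a + b) / 2 * y + q * s * a * b * y ^ 2
        + q * s * (a ^ 2 * b / 2 - a ^ 3 / 6) * y ^ 3 := by
    intro y hy
    rw [Set.uIcc_of_le (by norm_num)] at hy
    obtain ⟨h0, h1⟩ := hy
    rw [inner_aux q (q * a) s (s * b) (-(a * y)) y (by nlinarith) (by nlinarith)]
    · ring
    · intro x hx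
      rw [fac q, max_eq_right, zero_mul]
      exact mul_nonpos_of_nonneg_of_nonpos hq.le (by linarith)
    · intro x hx
      rw [fac, fac]
      exact ⟨mul_nonneg hq.le (by linarith), mul_nonneg hs.le (by nlinarith)⟩
  have hneg : ∀ y ∈ Set.uIcc (-1 : ℝ) 0, (∫ x in Set.Icc (-1 : ℝ) 1,
      (max (q * x + (q * a) * y) 0) * (max (s * x + (s * b) * y) 0)) =
      q * s / 3 + q * s * (a + b) / 2 * y + q * s * a * b * y ^ 2
        + q * s * (b ^ 2 * a / 2 - b ^ 3 / 6) * y ^ 3 := by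
    intro y hy
    rw [Set.uIcc_of_le (by norm_num)] at hy
    obtain ⟨h0, h1⟩ := hy
    rw [inner_aux q (q * a) s (s * b) (-(b * y)) y (by nlinarith) (by nlinarith)]
    · ring
    · intro x hx
      rw [fac s, max_eq_right (a := s * _), mul_zero]
      exact mul_nonpos_of_nonneg_of_nonpos hs.le (by linarith)
    · intro x hx
      rw [fac, fac]
      exact ⟨mul_nonneg hq.le (by nlinarith), mul_nonneg hs.le (by linarith)⟩
  rw [integral_Icc_eq_integral_Ioc, ← intervalIntegral.integral_of_le (by norm_num),
    ← intervalIntegral.integral_add_adjacent_intervals (b := 0)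
      (hII.mono_set (by
        rw [Set.uIcc_of_le (by norm_num), Set.uIcc_of_le (by norm_num)]
        exact Set.Icc_subset_Icc (by norm_num) (by norm_num)))
      (hII.mono_set (by
        rw [Set.uIcc_of_le (by norm_num), Set.uIcc_of_le (by norm_num)]
        exact Set.Icc_subset_Icc (by norm_num) (by norm_num))),
    intervalIntegral.integral_congr hpos, intervalIntegral.integral_congr hneg,
    poly_aux, poly_aux]
  ring

/-- for q,r,s,t ≥ 0 with qt ≥ rs, q + r > 0, s + t > 0, t < s,
∫_{[−1,1]²} max(q x₁ + r x₂, 0) max(s x₁ + t x₂, 0) dx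
  = (2/3)(qs + rt) + r²(3qt − rs)/(24q²) + t²(qt − 3rs)/(24s²). -/
theorem stmt19 (q r s t : ℝ) (hq : 0 ≤ q) (hr : 0 ≤ r) (hs : 0 ≤ s) (ht : 0 ≤ t)
    (hdet : r * s ≤ q * t) (hqr : 0 < q + r) (hst : 0 < s + t) (h1 : t < s) :
    ∫ p in (Set.Icc (-1 : ℝ) 1) ×ˢ (Set.Icc (-1 : ℝ) 1),
        (max (q * p.1 + r * p.2) 0) * (max (s * p.1 + t * p.2) 0) =
      (2 / 3) * (q * s + r * t) + r ^ 2 * (3 * (q * t) - r * s) / (24 * q ^ 2) +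
        t ^ 2 * (q * t - 3 * (r * s)) / (24 * s ^ 2) := by
  have hs' : 0 < s := by linarith
  have hq' : 0 < q := by
    rcases hq.lt_or_eq with h | h
    · exact h
    · subst h
      nlinarith [mul_pos (show 0 < r by linarith) hs']
  have h := main_aux q s (r / q) (t / s) hq' hs' (by positivity)
    (by rw [div_le_div_iff₀ hq' hs']; linarith) (by rw [div_lt_one hs']; exact h1)
  rw [mul_div_cancel₀ _ hq'.ne', mul_div_cancel₀ _ hs'.ne'] at h
  rw [h]
  field_simp
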